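/- arXiv:2406.09049 — 2 statements merged into one kernel-verified Lean document; each statement's English description precedes it below -/
import Mathlib

section
/- Let G and G' be bow-free acyclic path diagrams on the same finite vertex type V that are algebraically equivalent, i.e. A(G) = A(G'). Then for every subset W ⊆ V, the induced subgraphs G_W and G'_W (the mixed graphs on the subtype ↥W whose directed and bidirected edge relations are the restrictions of those of G and G') are also algebraically equivalent: A(G_W) = A(G'_W). (Theorem 5 of the paper.) -/
open Matrix

structure MixedGraph (V : Type*) where
  D : V → V → Prop
  B : V → V → Prop
  symm : ∀ v w, B v w → B w v
  irrefl : ∀ v, ¬ B v v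

namespace MixedGraph

variable {V : Type*}

/-- The graph is acyclic: no directed cycles. -/
def Acyclic (G : MixedGraph V) : Prop := ∀ v, ¬ Relation.TransGen G.D v v

/-- The graph is simple: for distinct `v, w`, at most one of
`D v w`, `D w v`, `B v w` holds. -/
def Simple (G : MixedGraph V) : Prop :=
  ∀ v w, v ≠ w →
    ¬ (G.D v w ∧ G.D w v) ∧ ¬ (G.D v w ∧ G.B v w) ∧ ¬ (G.D w v ∧ G.B v w)

/-- A bow-free acyclic path diagram: a simple acyclic mixed graph. -/
def IsBAP (G : MixedGraph V) : Prop := G.Acyclic ∧ G.Simple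

/-- `Λ` is compatible with `G`. -/
def LamCompat (G : MixedGraph V) (Λ : Matrix V V ℝ) : Prop :=
  ∀ v w, ¬ G.D v w → Λ v w = 0

/-- `Ω` is compatible with `G`. -/
def OmCompat [Fintype V] (G : MixedGraph V) (Ω : Matrix V V ℝ) : Prop :=
  Ω.PosDef ∧ ∀ v w, v ≠ w → ¬ G.B v w → ¬ G.B w v → Ω v w = 0

/-- The model `M(G)` of a mixed graph. -/
def model [Fintype V] [DecidableEq V] (G : MixedGraph V) : Set (Matrix V V ℝ) :=
  {S | ∃ Λ Ω : Matrix V V ℝ, G.LamCompat Λ ∧ G.OmCompat Ω ∧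
    S = ((1 - Λ)⁻¹)ᵀ * Ω * (1 - Λ)⁻¹}

/-- The algebraic model `A(G)`: the real Zariski closure of `M(G)`. -/
def algModel [Fintype V] [DecidableEq V] (G : MixedGraph V) : Set (Matrix V V ℝ) :=
  {S | ∀ p : MvPolynomial (V × V) ℝ,
    (∀ T ∈ G.model, MvPolynomial.eval (fun e => T e.1 e.2) p = 0) →
    MvPolynomial.eval (fun e => S e.1 e.2) p = 0}

/-- The skeleton (adjacency relation) of `G`. -/
def adj (G : MixedGraph V) (v w : V) : Prop :=
  v ≠ w ∧ (G.D v w ∨ G.D w v ∨ G.B v w)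

/-- A collider triple of `G`. -/
def ColliderTriple (G : MixedGraph V) (u v w : V) : Prop :=
  u ≠ v ∧ v ≠ w ∧ u ≠ w ∧ (G.D u v ∨ G.B u v) ∧ (G.D w v ∨ G.B w v)

/-- A v-structure of `G`. -/
def VStructure (G : MixedGraph V) (u v w : V) : Prop :=
  G.ColliderTriple u v w ∧ ¬ G.adj u w

end MixedGraph

/-- The induced subgraph of a mixed graph on a subset `W` of the vertices. -/
def MixedGraph.induce {V : Type*} (G : MixedGraph V) (W : Set V) : MixedGraph W where
  D v w := G.D v w
  B v w := G.B v w
  symm v w h := G.symm v w h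
  irrefl v := G.irrefl v

namespace MixedGraph

variable {V : Type*}

theorem induce_acyclic {G : MixedGraph V} (hG : G.Acyclic) (W : Set V) :
    (G.induce W).Acyclic := fun v hv =>
  hG v (Relation.TransGen.lift (r := (G.induce W).D) (p := G.D) Subtype.val (fun _ _ h => h) _ _ hv)

theorem Acyclic.wellFounded [Finite V] {G : MixedGraph V} (hG : G.Acyclic) :
    WellFounded G.D := by
  have : Std.Irrefl (Relation.TransGen G.D) := ⟨hG⟩
  exact Subrelation.wf (fun h => Relation.TransGen.single h)
    (Finite.wellFounded_of_trans_of_irrefl (Relation.TransGen G.D))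

section Fintype

variable [Fintype V] [DecidableEq V]

/-- A matrix supported on the directed edges of an acyclic graph is nilpotent. -/
theorem LamCompat.isNilpotent {G : MixedGraph V} (hG : G.Acyclic) {Λ : Matrix V V ℝ}
    (hΛ : G.LamCompat Λ) : IsNilpotent Λ := by
  have key : ∀ v, ∃ k, ∀ j ≥ k, ∀ w, (Λ ^ j) w v = 0 := by
    intro v
    induction v using hG.wellFounded.induction with
    | _ v ih =>
      choose! k hk using ih
      refine ⟨(Finset.univ.sup k) + 1, fun j hj w => ?_⟩
      obtain ⟨i, rfl⟩ : ∃ i, j = i + 1 := ⟨j - 1, by omega⟩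
      rw [pow_succ, Matrix.mul_apply]
      refine Finset.sum_eq_zero fun u _ => ?_
      by_cases huv : G.D u v
      · rw [hk u huv i ((Finset.le_sup (Finset.mem_univ u)).trans (by omega)) w, zero_mul]
      · rw [hΛ u v huv, mul_zero]
  choose k hk using key
  refine ⟨Finset.univ.sup k, ?_⟩
  ext w v
  exact hk v _ (Finset.le_sup (Finset.mem_univ v)) w

theorem mem_model_iff {G : MixedGraph V} (hG : G.Acyclic) {S : Matrix V V ℝ} :
    S ∈ G.model ↔
      ∃ Λ : Matrix V V ℝ, G.LamCompat Λ ∧ G.OmCompat ((1 - Λ)ᵀ * S * (1 - Λ)) := by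
  constructor
  · rintro ⟨Λ, Ω, hΛ, hΩ, rfl⟩
    refine ⟨Λ, hΛ, ?_⟩
    have hu : IsUnit (1 - Λ).det :=
      (Matrix.isUnit_iff_isUnit_det _).1 (hΛ.isNilpotent hG).isUnit_one_sub
    convert hΩ using 1
    calc (1 - Λ)ᵀ * (((1 - Λ)⁻¹)ᵀ * Ω * (1 - Λ)⁻¹) * (1 - Λ)
        = ((1 - Λ)⁻¹ * (1 - Λ))ᵀ * Ω * ((1 - Λ)⁻¹ * (1 - Λ)) := by
          rw [Matrix.transpose_mul]; simp only [Matrix.mul_assoc]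
      _ = Ω := by rw [Matrix.nonsing_inv_mul _ hu]; simp
  · rintro ⟨Λ, hΛ, hΩ⟩
    refine ⟨Λ, _, hΛ, hΩ, ?_⟩
    have hu : IsUnit (1 - Λ).det :=
      (Matrix.isUnit_iff_isUnit_det _).1 (hΛ.isNilpotent hG).isUnit_one_sub
    symm
    calc ((1 - Λ)⁻¹)ᵀ * ((1 - Λ)ᵀ * S * (1 - Λ)) * (1 - Λ)⁻¹
        = ((1 - Λ) * (1 - Λ)⁻¹)ᵀ * S * ((1 - Λ) * (1 - Λ)⁻¹) := by
          rw [Matrix.transpose_mul]; simp only [Matrix.mul_assoc]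
      _ = S := by rw [Matrix.mul_nonsing_inv _ hu]; simp

/-- Evaluation of polynomials in the matrix entries, as a ring homomorphism. -/
noncomputable abbrev evalAt (S : Matrix V V ℝ) : MvPolynomial (V × V) ℝ →+* ℝ :=
  MvPolynomial.eval fun e => S e.1 e.2

/-- `Λ` recovers from `S` a noise matrix with the zero pattern prescribed by `G`. -/
def Solves (G : MixedGraph V) (S Λ : Matrix V V ℝ) : Prop :=
  G.LamCompat Λ ∧
    ∀ v w, v ≠ w → ¬ G.B v w → ¬ G.B w v → ((1 - Λ)ᵀ * S * (1 - Λ) : Matrix V V ℝ) v w = 0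

theorem solves_one_zero (G : MixedGraph V) : G.Solves 1 0 :=
  ⟨fun _ _ _ => rfl, fun v w h _ _ => by simp [h]⟩

/-- Each column of the coefficient matrix is a rational function of the covariance matrix,
with a denominator that does not vanish at the identity. -/
theorem IsBAP.exists_column_eq {G : MixedGraph V} (hG : G.IsBAP) (v : V) :
    ∃ (d : MvPolynomial (V × V) ℝ) (n : V → MvPolynomial (V × V) ℝ), evalAt 1 d ≠ 0 ∧
      ∀ S Λ, G.Solves S Λ → ∀ w, evalAt S d * Λ w v = evalAt S (n w) := by
  classical
  induction v using hG.1.wellFounded.induction with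
  | _ v ih =>
    choose! d n hd hn using ih
    let row : V → V → MvPolynomial (V × V) ℝ := fun w p =>
      d w * MvPolynomial.X (w, p) - ∑ q, n w q * MvPolynomial.X (q, p)
    let a : Matrix V V (MvPolynomial (V × V) ℝ) := Matrix.of fun w p =>
      if G.D w v then row w p else if w = p then 1 else 0
    let b : V → MvPolynomial (V × V) ℝ := fun w => if G.D w v then row w v else 0
    have hrow : ∀ S Λ, G.Solves S Λ → ∀ w, G.D w v → ∀ p,
        evalAt S (row w p) = evalAt S (d w) * ((1 - Λ)ᵀ * S : Matrix V V ℝ) w p := by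
      intro S Λ h w hw p
      simp only [row, map_sub, map_mul, map_sum, MvPolynomial.eval_X]
      rw [Matrix.transpose_sub, Matrix.transpose_one, sub_mul, one_mul, Matrix.sub_apply,
        Matrix.mul_apply]
      simp only [← hn w hw S Λ h, Matrix.transpose_apply, mul_sub, Finset.mul_sum, mul_assoc]
    have hsys : ∀ S Λ, G.Solves S Λ →
        (evalAt S).mapMatrix a *ᵥ (fun w => Λ w v) = fun w => evalAt S (b w) := by
      intro S Λ h
      ext w
      by_cases hw : G.D w v
      · have hne : w ≠ v := by
          rintro rfl
          exact hG.1 w (.single hw)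
        have hB : ¬ G.B w v := fun hB => (hG.2 w v hne).2.1 ⟨hw, hB⟩
        have h0 := h.2 w v hne hB fun hB' => hB (G.symm _ _ hB')
        rw [Matrix.mul_sub, Matrix.mul_one, Matrix.sub_apply, sub_eq_zero,
          Matrix.mul_apply (N := Λ)] at h0
        simp only [Matrix.mulVec, dotProduct, RingHom.mapMatrix_apply, Matrix.map_apply,
          Matrix.of_apply, a, b, hw, if_true, hrow S Λ h w hw, h0, Finset.mul_sum, mul_assoc]
      · simp [Matrix.mulVec, dotProduct, a, b, hw, h.1 w v hw,
          apply_ite (MvPolynomial.eval _)]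
    refine ⟨a.det, fun w => ∑ p, a.adjugate w p * b p, ?_, fun S Λ h w => ?_⟩
    · have hdiag : (evalAt 1).mapMatrix a =
          Matrix.diagonal fun w => if G.D w v then evalAt 1 (d w) else 1 := by
        ext w p
        by_cases hw : G.D w v
        · rw [RingHom.mapMatrix_apply, Matrix.map_apply, show a w p = row w p from if_pos hw,
            hrow 1 0 G.solves_one_zero w hw]
          by_cases hwp : w = p
          · simp [hwp, hwp ▸ hw]
          · simp [hwp]
        · rw [RingHom.mapMatrix_apply, Matrix.map_apply]
          by_cases hwp : w = p
          · subst hwp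
            simp [a, hw]
          · simp [a, hw, hwp]
      rw [RingHom.map_det, hdiag, Matrix.det_diagonal, Finset.prod_ne_zero_iff]
      intro w _
      split_ifs with hw
      exacts [hd w hw, one_ne_zero]
    · have hadj := congrArg (fun x => ((evalAt S).mapMatrix a).adjugate *ᵥ x) (hsys S Λ h)
      simp only [Matrix.mulVec_mulVec, Matrix.adjugate_mul, Matrix.smul_mulVec,
        Matrix.one_mulVec] at hadj
      have hw := congrFun hadj w
      rw [← RingHom.map_det, ← RingHom.map_adjugate] at hw
      simpa [Matrix.mulVec, dotProduct] using hw

/-- The coefficient matrix is a rational function of the covariance matrix,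
with a denominator that does not vanish at the identity. -/
theorem IsBAP.exists_eq {G : MixedGraph V} (hG : G.IsBAP) :
    ∃ (d : MvPolynomial (V × V) ℝ) (n : Matrix V V (MvPolynomial (V × V) ℝ)),
      evalAt 1 d ≠ 0 ∧
      ∀ S Λ, G.Solves S Λ → evalAt S d • Λ = (evalAt S).mapMatrix n := by
  choose d n hd hn using hG.exists_column_eq
  refine ⟨∏ v, d v, Matrix.of fun w v => (∏ u ∈ Finset.univ.erase v, d u) * n v w, ?_,
    fun S Λ h => ?_⟩
  · rw [map_prod, Finset.prod_ne_zero_iff]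
    exact fun v _ => hd v
  · ext w v
    rw [Matrix.smul_apply, smul_eq_mul, RingHom.mapMatrix_apply, Matrix.map_apply, Matrix.of_apply,
      map_mul, ← hn v S Λ h w, ← mul_assoc, ← map_mul, Finset.prod_erase_mul _ _ (Finset.mem_univ v)]

/-- The generic matrix evaluates to the given matrix. -/
theorem evalAt_mapMatrix_mvPolynomialX (S : Matrix V V ℝ) :
    (evalAt S).mapMatrix (Matrix.mvPolynomialX V V ℝ) = S := by
  ext
  simp

/-- Away from the vanishing locus of the denominator, points of the algebraic model have a
unique coefficient matrix. -/
theorem exists_solves_of_mem_algModel {G : MixedGraph V} (hG : G.Acyclic)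
    {d : MvPolynomial (V × V) ℝ} {n : Matrix V V (MvPolynomial (V × V) ℝ)}
    (hn : ∀ S Λ, G.Solves S Λ → evalAt S d • Λ = (evalAt S).mapMatrix n)
    {S : Matrix V V ℝ} (hS : S ∈ G.algModel) (hd : evalAt S d ≠ 0) :
    ∃ Λ, G.Solves S Λ ∧ ∀ Λ', G.Solves S Λ' → Λ' = Λ := by
  let N : Matrix V V (MvPolynomial (V × V) ℝ) := d • 1 - n
  let Q := Nᵀ * Matrix.mvPolynomialX V V ℝ * N
  have hN : ∀ T Λ, evalAt T d • Λ = (evalAt T).mapMatrix n →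
      (evalAt T).mapMatrix Q = evalAt T d ^ 2 • ((1 - Λ)ᵀ * T * (1 - Λ)) := by
    intro T Λ h
    have h1 : (evalAt T).mapMatrix N = evalAt T d • (1 - Λ) := by
      rw [smul_sub, h, map_sub]
      congr 1
      ext v w
      by_cases hvw : v = w <;> simp [hvw]
    have h2 : (evalAt T).mapMatrix Nᵀ = evalAt T d • (1 - Λ)ᵀ := by
      rw [← Matrix.transpose_smul, ← h1]
      rfl
    rw [map_mul, map_mul, h1, h2, evalAt_mapMatrix_mvPolynomialX, smul_mul_assoc, smul_mul_assoc,
      mul_smul_comm, smul_smul, sq]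
  have hsolves : ∀ T ∈ G.model, ∃ Λ, G.Solves T Λ := fun T hT => by
    obtain ⟨Λ, hΛ, hΩ⟩ := (mem_model_iff hG).1 hT
    exact ⟨Λ, hΛ, hΩ.2⟩
  have heq : evalAt S d • ((evalAt S d)⁻¹ • (evalAt S).mapMatrix n) = (evalAt S).mapMatrix n :=
    smul_inv_smul₀ hd _
  refine ⟨(evalAt S d)⁻¹ • (evalAt S).mapMatrix n, ⟨fun v w hvw => ?_, fun v w hne h1 h2 => ?_⟩,
    fun Λ' h => ?_⟩
  · have : evalAt S (n v w) = 0 := hS _ fun T hT => by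
      obtain ⟨Λ, h⟩ := hsolves T hT
      have := congrFun (congrFun (hn T Λ h) v) w
      rw [Matrix.smul_apply, h.1 v w hvw, smul_zero] at this
      exact this.symm
    rw [Matrix.smul_apply, RingHom.mapMatrix_apply, Matrix.map_apply, this, smul_zero]
  · have h0 : evalAt S (Q v w) = 0 := hS _ fun T hT => by
      obtain ⟨Λ, h⟩ := hsolves T hT
      have := congrFun (congrFun (hN T Λ (hn T Λ h)) v) w
      rwa [Matrix.smul_apply, h.2 v w hne h1 h2, smul_zero] at this
    have := congrFun (congrFun (hN S _ heq) v) w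
    rw [RingHom.mapMatrix_apply, Matrix.map_apply, h0, Matrix.smul_apply, smul_eq_mul] at this
    exact (mul_eq_zero.1 this.symm).resolve_left (pow_ne_zero 2 hd)
  · rw [← hn S Λ' h, inv_smul_smul₀ hd]

/-- Flipping signs of coordinates preserves solutions. -/
theorem Solves.sign_conj {G : MixedGraph V} {S Λ : Matrix V V ℝ} (h : G.Solves S Λ)
    {s : V → ℝ} (hs : ∀ v, s v * s v = 1)
    (hS : Matrix.diagonal s * S * Matrix.diagonal s = S) :
    G.Solves S (Matrix.diagonal s * Λ * Matrix.diagonal s) := by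
  have hss : Matrix.diagonal s * Matrix.diagonal s = 1 := by
    rw [Matrix.diagonal_mul_diagonal, ← Matrix.diagonal_one]
    congr 1
    ext v
    exact hs v
  refine ⟨fun v w hvw => by simp [h.1 v w hvw], fun v w hne h1 h2 => ?_⟩
  have h3 : 1 - Matrix.diagonal s * Λ * Matrix.diagonal s =
      Matrix.diagonal s * (1 - Λ) * Matrix.diagonal s := by
    rw [Matrix.mul_sub, Matrix.sub_mul, Matrix.mul_one, hss]
  have h4 : (1 - Matrix.diagonal s * Λ * Matrix.diagonal s)ᵀ * S *
      (1 - Matrix.diagonal s * Λ * Matrix.diagonal s) =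
      Matrix.diagonal s * ((1 - Λ)ᵀ * S * (1 - Λ)) * Matrix.diagonal s := by
    rw [h3, Matrix.transpose_mul, Matrix.transpose_mul, Matrix.diagonal_transpose]
    conv_rhs => rw [← hS]
    simp only [Matrix.mul_assoc]
  rw [h4, Matrix.mul_diagonal, Matrix.diagonal_mul, h.2 v w hne h1 h2, mul_zero, zero_mul]

end Fintype

/-- Restriction to `W` is multiplicative when the right factor has no entries from outside `W`
into `W`. -/
theorem submatrix_mul_of_forall_eq_zero [Fintype V] {W : Set V}
    [DecidablePred (· ∈ W)] {A B : Matrix V V ℝ}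
    (hB : ∀ u ∉ W, ∀ w ∈ W, B u w = 0) :
    (A * B).submatrix (Subtype.val : W → V) Subtype.val =
      A.submatrix (Subtype.val : W → V) (Subtype.val : W → V) *
        B.submatrix Subtype.val Subtype.val := by
  ext v w
  simp only [Matrix.submatrix_apply, Matrix.mul_apply]
  rw [← Fintype.sum_subtype_add_sum_subtype (· ∈ W)]
  refine (add_eq_left.2 (Finset.sum_eq_zero fun u _ => ?_))
  rw [hB u u.2 w w.2, mul_zero]

section Extend

variable [DecidableEq V] {W : Set V} [DecidablePred (· ∈ W)] {R : Type*}

/-- The matrix on `V` that is `A` on `W`, the scalar `c` on the complement, and zero across. -/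
def extend [Zero R] (c : R) (A : Matrix W W R) : Matrix V V R := fun v w =>
  if h : v ∈ W ∧ w ∈ W then A ⟨v, h.1⟩ ⟨w, h.2⟩ else
    if v ∉ W ∧ v = w then c else 0

theorem extend_eq_submatrix [Zero R] [One R] (c : R) (A : Matrix W W R) :
    extend c A = (Matrix.fromBlocks A 0 0 (Matrix.diagonal fun _ => c)).submatrix
      (Equiv.sumCompl (· ∈ W)).symm (Equiv.sumCompl (· ∈ W)).symm := by
  ext v w
  by_cases hv : v ∈ W <;> by_cases hw : w ∈ W <;>
    simp [extend, hv, hw, Equiv.sumCompl_symm_apply_of_pos,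
      Equiv.sumCompl_symm_apply_of_neg, Matrix.diagonal_apply]
  all_goals
    rintro rfl
    contradiction

theorem extend_mul [Fintype V] [CommRing R] (a b : R) (A B : Matrix W W R) :
    extend (a * b) (A * B) = extend a A * extend b B := by
  simp only [extend_eq_submatrix, Matrix.submatrix_mul_equiv, Matrix.fromBlocks_multiply]
  simp

theorem extend_transpose [Zero R] (c : R) (A : Matrix W W R) :
    extend c Aᵀ = (extend c A)ᵀ := by
  ext v w
  by_cases hv : v ∈ W <;> by_cases hw : w ∈ W <;> simp [extend, hv, hw, eq_comm]
  all_goals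
    rintro rfl
    contradiction

theorem one_sub_extend_zero [CommRing R] (A : Matrix W W R) :
    (1 : Matrix V V R) - extend 0 A = extend 1 (1 - A) := by
  ext v w
  by_cases hv : v ∈ W <;> by_cases hw : w ∈ W <;>
    simp [extend, hv, hw, Matrix.one_apply]
  all_goals
    rintro rfl
    contradiction

theorem extend_one_one [CommRing R] : extend (1 : R) (1 : Matrix W W R) = 1 := by
  ext v w
  by_cases hv : v ∈ W <;> by_cases hw : w ∈ W <;>
    simp [extend, hv, hw, Matrix.one_apply]
  all_goals
    rintro rfl
    contradiction

theorem posDef_extend_one [Finite V] {A : Matrix W W ℝ} (hA : A.PosDef) : (extend 1 A).PosDef := by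
  have := Fintype.ofFinite V
  rw [extend_eq_submatrix]
  refine Matrix.PosDef.submatrix (Matrix.PosDef.of_dotProduct_mulVec_pos
    (Matrix.IsHermitian.fromBlocks hA.1 (by simp) (by simp [Matrix.IsHermitian])) fun x hx => ?_)
    (Equiv.injective _)
  have hsplit : star x ⬝ᵥ Matrix.fromBlocks A 0 0 (Matrix.diagonal fun _ => 1) *ᵥ x =
      star (x ∘ Sum.inl) ⬝ᵥ A *ᵥ (x ∘ Sum.inl) + (x ∘ Sum.inr) ⬝ᵥ (x ∘ Sum.inr) := by
    rw [Matrix.fromBlocks_mulVec]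
    simp [dotProduct, Fintype.sum_sum_type]
  rw [hsplit]
  by_cases hl : x ∘ Sum.inl = 0
  · have hr : x ∘ Sum.inr ≠ 0 := fun hr => hx <| by
      ext (i | i)
      exacts [congrFun hl i, congrFun hr i]
    have := Matrix.dotProduct_star_self_pos_iff.2 hr
    simpa [hl] using this
  · exact add_pos_of_pos_of_nonneg (hA.dotProduct_mulVec_pos hl)
      (Finset.sum_nonneg fun i _ => mul_self_nonneg _)

theorem extend_submatrix [Zero R] (c : R) (A : Matrix W W R) :
    (extend c A).submatrix Subtype.val Subtype.val = A := by
  ext v w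
  simp [extend]

variable [Fintype V]

theorem extend_mem_model {G : MixedGraph V} (hG : G.Acyclic) {S : Matrix W W ℝ}
    (hS : S ∈ (G.induce W).model) : extend 1 S ∈ G.model := by
  obtain ⟨Λ, hΛ, hΩ⟩ := (mem_model_iff (induce_acyclic hG W)).1 hS
  refine (mem_model_iff hG).2 ⟨extend 0 Λ, fun v w hvw => ?_, ?_⟩
  · by_cases h : v ∈ W ∧ w ∈ W
    · simpa [extend, h] using hΛ ⟨v, h.1⟩ ⟨w, h.2⟩ hvw
    · simp [extend, h]
  · have heq : (1 - extend 0 Λ : Matrix V V ℝ)ᵀ * extend 1 S * (1 - extend 0 Λ) =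
        extend 1 ((1 - Λ)ᵀ * S * (1 - Λ)) := by
      rw [one_sub_extend_zero, ← extend_transpose, ← extend_mul, ← extend_mul, one_mul, one_mul]
    rw [heq]
    refine ⟨posDef_extend_one hΩ.1, fun v w hne h1 h2 => ?_⟩
    by_cases h : v ∈ W ∧ w ∈ W
    · rw [extend, dif_pos h]
      exact hΩ.2 ⟨v, h.1⟩ ⟨w, h.2⟩ (fun h' => hne (congrArg Subtype.val h')) h1 h2
    · simp [extend, h, hne]

/-- A positive definite matrix on `W` whose extension has a unique solution for `G` lies in the
model of the induced subgraph. -/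
theorem mem_model_induce_of_solves {G : MixedGraph V} (hG : G.Acyclic) {S : Matrix W W ℝ}
    (hS : S.PosDef) {Λ : Matrix V V ℝ} (hΛ : G.Solves (extend 1 S) Λ)
    (huniq : ∀ Λ', G.Solves (extend 1 S) Λ' → Λ' = Λ) : S ∈ (G.induce W).model := by
  let s : V → ℝ := fun v => if v ∈ W then 1 else -1
  have hconj := huniq _ (hΛ.sign_conj (s := s) (fun v => by by_cases hv : v ∈ W <;> simp [s, hv])
    (by
      ext v w
      by_cases hv : v ∈ W <;> by_cases hw : w ∈ W <;> simp [s, extend, hv, hw]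
      · have : v ≠ w := fun h => hv (h ▸ hw)
        simp [this]
      · split_ifs <;> simp))
  have hzero : ∀ u ∉ W, ∀ w ∈ W, Λ u w = 0 := fun u hu w hw => by
    have := congrFun (congrFun hconj u) w
    simp only [Matrix.mul_diagonal, Matrix.diagonal_mul, s, hu, hw, if_true, if_false] at this
    linarith
  have hzero' : ∀ u ∉ W, ∀ w ∈ W, (1 - Λ) u w = 0 := fun u hu w hw => by
    have : u ≠ w := fun h => hu (h ▸ hw)
    simp [hzero u hu w hw, this]
  let A : Matrix W W ℝ := Λ.submatrix Subtype.val Subtype.val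
  have hA : (G.induce W).LamCompat A := fun v w hvw => hΛ.1 v w hvw
  have h1 : (1 - Λ).submatrix (Subtype.val : W → V) Subtype.val = 1 - A := by
    ext v w
    simp [A, Matrix.one_apply, Subtype.ext_iff]
  have h2 : ((1 - Λ)ᵀ * extend 1 S * (1 - Λ)).submatrix (Subtype.val : W → V) Subtype.val =
      (1 - A)ᵀ * S * (1 - A) := by
    rw [submatrix_mul_of_forall_eq_zero hzero', h1]
    congr 1
    have := submatrix_mul_of_forall_eq_zero (A := (extend 1 S)ᵀ) hzero'
    rw [h1] at this
    have h3 := congrArg Matrix.transpose this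
    rw [Matrix.transpose_mul, Matrix.transpose_submatrix, Matrix.transpose_submatrix,
      Matrix.transpose_mul, Matrix.transpose_transpose, extend_submatrix] at h3
    exact h3
  refine (mem_model_iff (induce_acyclic hG W)).2 ⟨A, hA, ?_, fun v w hne hB hB' => ?_⟩
  · have hu := (hA.isNilpotent (induce_acyclic hG W)).isUnit_one_sub
    exact (Matrix.IsUnit.posDef_star_left_conjugate_iff hu).2 hS
  · rw [← h2]
    exact hΛ.2 v w (fun h => hne (Subtype.ext h)) hB hB'

end Extend

section Curve

variable [Fintype V] [DecidableEq V]

/-- Each point of the model is joined to the identity by a polynomial curve in the model. -/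
theorem exists_polynomial_curve {G : MixedGraph V} (hG : G.Acyclic) {S : Matrix V V ℝ}
    (hS : S ∈ G.model) : ∃ C : Matrix V V (Polynomial ℝ),
      (Polynomial.evalRingHom 0).mapMatrix C = 1 ∧ (Polynomial.evalRingHom 1).mapMatrix C = S ∧
      ∀ t ∈ Set.Icc (0 : ℝ) 1, (Polynomial.evalRingHom t).mapMatrix C ∈ G.model := by
  obtain ⟨Λ, Ω, hΛ, hΩ, rfl⟩ := hS
  obtain ⟨k, hk⟩ := hΛ.isNilpotent hG
  let Λt : Matrix V V (Polynomial ℝ) := (Polynomial.X : Polynomial ℝ) • Polynomial.C.mapMatrix Λ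
  let N := ∑ i ∈ Finset.range k, Λt ^ i
  let Ωt : Matrix V V (Polynomial ℝ) :=
    (1 - Polynomial.X : Polynomial ℝ) • 1 + (Polynomial.X : Polynomial ℝ) • Polynomial.C.mapMatrix Ω
  have hΛt : ∀ t, (Polynomial.evalRingHom t).mapMatrix Λt = t • Λ := fun t => by
    ext
    simp [Λt, mul_comm t]
  have hΩt : ∀ t, (Polynomial.evalRingHom t).mapMatrix Ωt = (1 - t) • 1 + t • Ω := fun t => by
    ext v w
    by_cases h : v = w <;> simp [Ωt, h, mul_comm t]
  have hN : ∀ t, (Polynomial.evalRingHom t).mapMatrix N = (1 - t • Λ)⁻¹ := fun t => by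
    refine (Matrix.inv_eq_right_inv ?_).symm
    simp only [N, map_sum, map_pow, hΛt]
    rw [mul_neg_geom_sum, smul_pow, hk, smul_zero, sub_zero]
  have hC : ∀ t, (Polynomial.evalRingHom t).mapMatrix (Nᵀ * Ωt * N) =
      ((1 - t • Λ)⁻¹)ᵀ * ((1 - t) • 1 + t • Ω) * (1 - t • Λ)⁻¹ := fun t => by
    rw [map_mul, map_mul, hΩt, hN, ← hN]
    rfl
  refine ⟨Nᵀ * Ωt * N, ?_, ?_, fun t ht => ?_⟩
  · rw [hC]
    simp
  · rw [hC]
    simp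
  · rw [hC]
    refine ⟨t • Λ, _, fun v w h => by simp [hΛ v w h], ⟨?_, fun v w hne h1 h2 => ?_⟩, rfl⟩
    · rcases ht.1.eq_or_lt with rfl | h0
      · simpa using Matrix.PosDef.one
      · rw [add_comm]
        exact (hΩ.1.smul h0).add_posSemidef
          (Matrix.PosSemidef.one.smul (sub_nonneg.2 ht.2))
    · simp [hne, hΩ.2 v w hne h1 h2]

theorem model_posDef {G : MixedGraph V} (hG : G.Acyclic) {S : Matrix V V ℝ}
    (hS : S ∈ G.model) : S.PosDef := by
  obtain ⟨Λ, hΛ, hΩ⟩ := (mem_model_iff hG).1 hS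
  exact (Matrix.IsUnit.posDef_star_left_conjugate_iff
    (hΛ.isNilpotent hG).isUnit_one_sub).1 hΩ.1

theorem eval_aeval_entries (C : Matrix V V (Polynomial ℝ)) (p : MvPolynomial (V × V) ℝ) (t : ℝ) :
    Polynomial.eval t (MvPolynomial.aeval (fun e => C e.1 e.2) p) =
      evalAt ((Polynomial.evalRingHom t).mapMatrix C) p := by
  induction p using MvPolynomial.induction_on with
  | C a => simp
  | add p q hp hq => simp only [map_add, Polynomial.eval_add, hp, hq]
  | mul_X p i hp => simp only [map_mul, Polynomial.eval_mul, hp]; simp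

end Curve

theorem algModel_induce_subset [Fintype V] [DecidableEq V] {G G' : MixedGraph V}
    (hG : G.Acyclic) (hG' : G'.IsBAP) (hsub : G.algModel ⊆ G'.algModel)
    (W : Set V) [DecidablePred (· ∈ W)] :
    (G.induce W).algModel ⊆ (G'.induce W).algModel := by
  intro S hS p hp
  refine hS p fun T hT => ?_
  obtain ⟨d, n, hd, hn⟩ := hG'.exists_eq
  obtain ⟨C, hC0, hC1, hC⟩ := exists_polynomial_curve (induce_acyclic hG W) hT
  let f : Polynomial ℝ := MvPolynomial.aeval (fun e => C e.1 e.2) p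
  let g : Polynomial ℝ := MvPolynomial.aeval (fun e => (extend 1 C) e.1 e.2) d
  have hext : ∀ t : ℝ, (Polynomial.evalRingHom t).mapMatrix (extend 1 C : Matrix V V _) =
      extend 1 ((Polynomial.evalRingHom t).mapMatrix C) := fun t => by
    ext v w
    simp only [extend, RingHom.mapMatrix_apply, Matrix.map_apply]
    split_ifs <;> simp
  have hg : g ≠ 0 := fun h => hd <| by
    have := eval_aeval_entries (extend 1 C : Matrix V V _) d 0
    rw [hext, hC0, extend_one_one] at this
    rw [← this]
    exact (congrArg (Polynomial.eval 0) h).trans Polynomial.eval_zero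
  have hfg : f * g = 0 := by
    refine Polynomial.eq_zero_of_infinite_isRoot _
      ((Set.Icc_infinite (zero_lt_one' ℝ)).mono fun t ht => ?_)
    rw [Set.mem_ofPred_eq, Polynomial.IsRoot, Polynomial.eval_mul, eval_aeval_entries,
      eval_aeval_entries, hext, mul_eq_zero, or_iff_not_imp_right]
    intro hdt
    have hmem := hsub fun q hq => hq _ (extend_mem_model hG (hC t ht))
    obtain ⟨Λ, hΛ, huniq⟩ := exists_solves_of_mem_algModel hG'.1 hn hmem hdt
    exact hp _ (mem_model_induce_of_solves hG'.1
      (model_posDef (induce_acyclic hG W) (hC t ht)) hΛ huniq)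
  have hf : f = 0 := (mul_eq_zero.1 hfg).resolve_right hg
  have := eval_aeval_entries C p 1
  rw [hC1] at this
  exact this.symm.trans ((congrArg (Polynomial.eval 1) hf).trans Polynomial.eval_zero)

end MixedGraph

/-- Theorem 5: If two BAPs are algebraically equivalent, then so are
their induced subgraphs on any subset `W` of the vertices. -/
theorem algModel_induce_eq_of_algModel_eq
    {V : Type*} [Fintype V] [DecidableEq V]
    (G G' : MixedGraph V) (hG : G.IsBAP) (hG' : G'.IsBAP)
    (heq : G.algModel = G'.algModel)
    (W : Set V) [DecidablePred (· ∈ W)] :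
    (G.induce W).algModel = (G'.induce W).algModel := by
  exact (MixedGraph.algModel_induce_subset hG.1 hG' heq.subset W).antisymm
    (MixedGraph.algModel_induce_subset hG'.1 hG heq.symm.subset W)
end

section
/- Let G and G' be bow-free acyclic path diagrams on the same finite vertex type V that have the same skeleton. If A(G) ⊆ A(G'), then A(G) = A(G'). (The fact, underlying Algorithm 3, that for two BAPs with the same skeleton it suffices to check inclusion of algebraic models in one direction: the dimension of the model is determined by the number of edges, and if two different algebraic models have the same dimension then neither can be contained in the other.) -/
open Matrix

/-- An endomorphism of a Noetherian domain which is the identity modulo a proper ideal `I`, and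
which agrees with the identity modulo `I ^ 2` on generators of `I`, is injective. -/
theorem RingHom.injective_of_sub_mem_sq {R : Type*} [CommRing R] [IsDomain R]
    [IsNoetherianRing R] (f : R →+* R) (s : Set R) (hs : Ideal.span s ≠ ⊤)
    (h_mem : ∀ p, f p - p ∈ Ideal.span s) (h_sq : ∀ p ∈ s, f p - p ∈ Ideal.span s ^ 2) :
    Function.Injective f := by
  set I := Ideal.span s
  have h_one : ∀ p ∈ I, f p - p ∈ I ^ 2 := by
    intro p hp
    induction hp using Submodule.span_induction with
    | mem x hx => exact h_sq x hx
    | zero => simp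
    | add x y _ _ hx hy =>
      rw [map_add, add_sub_add_comm]
      exact add_mem hx hy
    | smul a x hx ih =>
      have hxI : x ∈ I := hx
      have hfx : f x ∈ I := by simpa using add_mem (h_mem x) hxI
      have key : f (a • x) - a • x = (f a - a) * f x + a * (f x - x) := by
        simp only [smul_eq_mul, map_mul]; ring
      rw [key]
      refine add_mem ?_ (Ideal.mul_mem_left _ _ ih)
      rw [pow_two]
      exact Ideal.mul_mem_mul (h_mem a) hfx
  have h_pow : ∀ d : ℕ, ∀ p ∈ I ^ d, f p - p ∈ I ^ (d + 1) := by
    intro d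
    induction d with
    | zero => intro p _; simpa using h_mem p
    | succ d ih =>
      intro p hp
      rw [pow_succ] at hp
      refine Submodule.mul_induction_on hp (fun b hb a ha => ?_) (fun x y hx hy => ?_)
      · have hfb : f b ∈ I ^ d := by
          simpa using add_mem (Ideal.pow_le_pow_right d.le_succ (ih b hb)) hb
        have key : f (b * a) - b * a = f b * (f a - a) + (f b - b) * a := by
          simp only [map_mul]; ring
        rw [key]
        refine add_mem ?_ ?_
        · rw [show d + 1 + 1 = d + 2 from rfl, pow_add]
          exact Ideal.mul_mem_mul hfb (h_one a ha)
        · rw [pow_succ I (d + 1)]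
          exact Ideal.mul_mem_mul (ih b hb) ha
      · rw [map_add, add_sub_add_comm]
        exact add_mem hx hy
  rw [injective_iff_map_eq_zero]
  intro p hp
  have h_all : ∀ d : ℕ, p ∈ I ^ d := by
    intro d
    induction d with
    | zero => simp
    | succ d ih => simpa [hp] using h_pow d p ih
  have h_inf : p ∈ ⨅ d : ℕ, I ^ d := by simpa [Submodule.mem_iInf] using h_all
  rwa [Ideal.iInf_pow_eq_bot_of_isDomain I hs] at h_inf

/-- An endomorphism of a polynomial ring which sends each variable to itself plus terms of order at
least two is injective. -/
theorem MvPolynomial.injective_of_X_sub_mem_sq {K σ : Type*} [Field K] [Finite σ]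
    (f : MvPolynomial σ K →ₐ[K] MvPolynomial σ K)
    (h_sq : ∀ i, f (X i) - X i ∈ (Ideal.span (Set.range X) : Ideal (MvPolynomial σ K)) ^ 2) :
    Function.Injective f := by
  have h_ne_top : (Ideal.span (Set.range X) : Ideal (MvPolynomial σ K)) ≠ ⊤ := by
    refine ne_top_of_le_ne_top (RingHom.ker_ne_top (eval (0 : σ → K))) (Ideal.span_le.mpr ?_)
    rintro _ ⟨i, rfl⟩
    simp
  have h_mem : ∀ p, f p - p ∈ (Ideal.span (Set.range X) : Ideal (MvPolynomial σ K)) := by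
    intro p
    induction p using MvPolynomial.induction_on with
    | C a => simp
    | add p q hp hq =>
      rw [map_add, add_sub_add_comm]
      exact add_mem hp hq
    | mul_X p i hp =>
      have key : f (p * X i) - p * X i = (f p - p) * f (X i) + p * (f (X i) - X i) := by
        rw [map_mul]; ring
      rw [key]
      exact add_mem (Ideal.mul_mem_right _ _ hp)
        (Ideal.mul_mem_left _ _ (Ideal.pow_le_self two_ne_zero (h_sq i)))
  refine RingHom.injective_of_sub_mem_sq f.toRingHom (Set.range X) h_ne_top h_mem ?_
  rintro _ ⟨i, rfl⟩
  exact h_sq i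

/-- If `n` elements of an algebra stay algebraically independent under `φ`, then no homomorphism
`φ'` to the polynomial ring in `n` variables can have a kernel strictly smaller than that
of `φ`. -/
theorem AlgHom.ker_le_ker_of_injective_comp {K σ R A : Type*} [Field K] [_root_.Finite σ] [CommRing R]
    [Algebra K R] [CommRing A] [Algebra K A] (φ : R →ₐ[K] A) (φ' : R →ₐ[K] MvPolynomial σ K)
    (s : MvPolynomial σ K →ₐ[K] R) (h_inj : Function.Injective (φ.comp s))
    (h_ker : ∀ p, φ' p = 0 → φ p = 0) (p : R) (hp : φ p = 0) : φ' p = 0 := by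
  by_contra h_ne
  have h_inj' : Function.Injective (φ'.comp s) := by
    rw [injective_iff_map_eq_zero] at h_inj ⊢
    exact fun q hq => h_inj q (h_ker _ hq)
  have h_aeval : MvPolynomial.aeval (fun i => φ' (s (MvPolynomial.X i))) = φ'.comp s := by
    ext i; simp
  have h_ind : AlgebraicIndependent K (fun i => φ' (s (MvPolynomial.X i))) := by
    rw [AlgebraicIndependent, h_aeval]
    exact h_inj'
  have h_basis : IsTranscendenceBasis K (fun i => φ' (s (MvPolynomial.X i))) := by
    apply h_ind.isTranscendenceBasis_of_lift_trdeg_le_of_finite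
    rw [MvPolynomial.trdeg_of_isDomain]
    simp
  have h_alg := h_basis.isAlgebraic.isAlgebraic (φ' p)
  obtain ⟨q, hq0, hq⟩ := h_alg.exists_nonzero_coeff_and_aeval_eq_zero
    (mem_nonZeroDivisors_of_ne_zero h_ne)
  have h_lift : ∀ i, ∃ c : MvPolynomial σ K, φ' (s c) = (q.coeff i : MvPolynomial σ K) := by
    intro i
    have h_range : ∀ a ∈ Algebra.adjoin K (Set.range fun i => φ' (s (MvPolynomial.X i))),
        ∃ c : MvPolynomial σ K, φ' (s c) = a := by
      intro a ha
      rwa [Algebra.adjoin_range_eq_range_aeval, h_aeval] at ha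
    exact h_range _ (q.coeff i).2
  choose c hc using h_lift
  have h_zero : φ' (∑ i ∈ Finset.range (q.natDegree + 1), s (c i) * p ^ i) = 0 := by
    rw [← hq, Polynomial.aeval_eq_sum_range, map_sum]
    refine Finset.sum_congr rfl fun i _ => ?_
    rw [map_mul, map_pow, hc]
    rfl
  have h_image := h_ker _ h_zero
  simp only [map_sum, map_mul, map_pow, hp] at h_image
  rw [Finset.sum_eq_single_of_mem 0 (by simp) (fun i _ hi => by simp [hi])] at h_image
  have h_c : c 0 = 0 := h_inj (by simpa using h_image)
  apply hq0
  apply Subtype.ext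
  rw [← hc 0, h_c]
  simp

/-- A real symmetric strictly diagonally dominant matrix with positive diagonal is positive
definite. -/
theorem Matrix.IsHermitian.posDef_of_sum_row_lt_diag {n : Type*} [Fintype n] [DecidableEq n]
    {A : Matrix n n ℝ} (hA : A.IsHermitian)
    (h : ∀ k, ∑ j ∈ Finset.univ.erase k, ‖A k j‖ < A k k) : A.PosDef := by
  rw [hA.posDef_iff_eigenvalues_pos]
  intro i
  have h_spec := hA.eigenvalues_mem_spectrum_real i
  rw [← Matrix.spectrum_toLin', ← Module.End.hasEigenvalue_iff_mem_spectrum] at h_spec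
  obtain ⟨k, hk⟩ := eigenvalue_mem_ball h_spec
  rw [Metric.mem_closedBall, Real.dist_eq] at hk
  linarith [h k, neg_abs_le (hA.eigenvalues i - A k k)]

namespace MixedGraph

section Parametrization

variable {V R S : Type*} [CommRing R] [CommRing S]

open Classical in
/-- The matrix of edge coefficients whose entry at a directed edge `v → w` is `x s(v, w)`. -/
noncomputable def lamMat (G : MixedGraph V) (x : Sym2 V → R) : Matrix V V R :=
  fun v w => if G.D v w then x s(v, w) else 0

open Classical in
/-- The error covariance matrix with diagonal entries `1 + x s(v, v)` and with entry `x s(v, w)`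
at a bidirected edge between `v` and `w`. -/
noncomputable def omMat (G : MixedGraph V) (x : Sym2 V → R) : Matrix V V R :=
  fun v w => if v = w then 1 + x s(v, w) else if G.B v w then x s(v, w) else 0

/-- The covariance matrix of the parameters `G.lamMat x` and `G.omMat x`, with the inverse of
`1 - G.lamMat x` expanded as a geometric sum. -/
noncomputable def covMat [Fintype V] [DecidableEq V] (G : MixedGraph V) (x : Sym2 V → R) :
    Matrix V V R :=
  (∑ k ∈ Finset.range (Fintype.card V + 2), G.lamMat x ^ k)ᵀ * G.omMat x *
    ∑ k ∈ Finset.range (Fintype.card V + 2), G.lamMat x ^ k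

theorem map_covMat [Fintype V] [DecidableEq V] (G : MixedGraph V) (x : Sym2 V → R)
    (f : R →+* S) : (G.covMat x).map f = G.covMat (f ∘ x) := by
  have h_lam : f.mapMatrix (G.lamMat x) = G.lamMat (f ∘ x) := by
    ext v w
    simp only [RingHom.mapMatrix_apply, Matrix.map_apply, lamMat]
    split_ifs <;> simp
  have h_om : f.mapMatrix (G.omMat x) = G.omMat (f ∘ x) := by
    ext v w
    simp only [RingHom.mapMatrix_apply, Matrix.map_apply, omMat]
    split_ifs <;> simp
  rw [covMat, covMat, Matrix.map_mul, Matrix.map_mul, Matrix.transpose_map, ← h_lam, ← h_om]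
  simp only [← RingHom.mapMatrix_apply, map_sum, map_pow]

theorem map_covMat_apply [Fintype V] [DecidableEq V] (G : MixedGraph V) (x : Sym2 V → R)
    (f : R →+* S) (v w : V) : f (G.covMat x v w) = G.covMat (f ∘ x) v w := by
  rw [← map_covMat]; rfl

theorem Acyclic.not_D_self {G : MixedGraph V} (hG : G.Acyclic) (v : V) : ¬ G.D v v :=
  fun h => hG v (.single h)

theorem Acyclic.pow_card_eq_zero [Fintype V] [DecidableEq V] {G : MixedGraph V} (hG : G.Acyclic)
    {L : Matrix V V R} (hL : ∀ v w, ¬ G.D v w → L v w = 0) : L ^ Fintype.card V = 0 := by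
  classical
  let anc : V → Finset V := fun w => Finset.univ.filter fun u => Relation.TransGen G.D u w
  have h_anc : ∀ k : ℕ, ∀ v w, (L ^ k) v w ≠ 0 → k ≤ (anc w).card := by
    intro k
    induction k with
    | zero => simp
    | succ k ih =>
      intro v w h
      rw [pow_succ, Matrix.mul_apply] at h
      obtain ⟨u, -, hu⟩ := Finset.exists_ne_zero_of_sum_ne_zero h
      have h_edge : G.D u w := by
        by_contra h_not
        exact hu (by rw [hL u w h_not, mul_zero])
      have h_lt : anc u ⊂ anc w := by
        rw [Finset.ssubset_iff_of_subset]
        · exact ⟨u, by simpa [anc] using .single h_edge, by simpa [anc] using hG u⟩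
        · intro t ht
          simp only [anc, Finset.mem_filter, Finset.mem_univ, true_and] at ht ⊢
          exact ht.tail h_edge
      exact (ih v u (left_ne_zero_of_mul hu)).trans_lt (Finset.card_lt_card h_lt)
  ext v w
  by_contra h
  have h_lt : (anc w).card < Fintype.card V :=
    Finset.card_lt_univ_of_notMem (x := w) (by simpa [anc] using hG w)
  exact absurd (h_anc _ v w h) (not_le.mpr h_lt)

theorem Acyclic.geom_sum_eq_inv [Fintype V] [DecidableEq V] {G : MixedGraph V} (hG : G.Acyclic)
    {L : Matrix V V R} (hL : ∀ v w, ¬ G.D v w → L v w = 0) :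
    ∑ k ∈ Finset.range (Fintype.card V + 2), L ^ k = (1 - L)⁻¹ := by
  refine (Matrix.inv_eq_right_inv ?_).symm
  rw [mul_neg_geom_sum, pow_add, hG.pow_card_eq_zero hL, zero_mul, sub_zero]

theorem lamMat_eq_zero (G : MixedGraph V) (x : Sym2 V → R) (v w : V) (h : ¬ G.D v w) :
    G.lamMat x v w = 0 := if_neg h

theorem Acyclic.covMat_eq [Fintype V] [DecidableEq V] {G : MixedGraph V} (hG : G.Acyclic)
    (x : Sym2 V → R) :
    G.covMat x = ((1 - G.lamMat x)⁻¹)ᵀ * G.omMat x * (1 - G.lamMat x)⁻¹ := by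
  rw [covMat, hG.geom_sum_eq_inv (G.lamMat_eq_zero x)]

/-- When all products of two parameters vanish, the covariance matrix is linear in the
parameters. -/
theorem covMat_of_mul_eq_zero [Fintype V] [DecidableEq V] (G : MixedGraph V) (x : Sym2 V → R)
    (hx : ∀ e e', x e * x e' = 0) :
    G.covMat x = G.omMat x + G.lamMat x + (G.lamMat x)ᵀ := by
  classical
  obtain ⟨N, hN⟩ : ∃ N, G.omMat x = 1 + N := ⟨G.omMat x - 1, by simp⟩
  have h_N : ∀ v w, N v w = 0 ∨ ∃ e, N v w = x e := by
    intro v w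
    have h : N v w = G.omMat x v w - (1 : Matrix V V R) v w := by simp [hN]
    rw [h, omMat, Matrix.one_apply]
    split_ifs
    · exact .inr ⟨s(v, w), by ring⟩
    · exact .inr ⟨s(v, w), by ring⟩
    · exact .inl (by ring)
  have h_lam : ∀ v w, G.lamMat x v w = 0 ∨ ∃ e, G.lamMat x v w = x e := by
    intro v w
    rw [lamMat]
    split_ifs
    · exact .inr ⟨_, rfl⟩
    · exact .inl rfl
  have h_mul : ∀ P Q : Matrix V V R, (∀ v w, P v w = 0 ∨ ∃ e, P v w = x e) →
      (∀ v w, Q v w = 0 ∨ ∃ e, Q v w = x e) → P * Q = 0 := by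
    intro P Q hP hQ
    ext v w
    rw [Matrix.mul_apply]
    refine Finset.sum_eq_zero fun u _ => ?_
    rcases hP v u with h | ⟨e, h⟩ <;> rcases hQ u w with h' | ⟨e', h'⟩ <;> simp [h, h', hx]
  have h_tr : ∀ v w, (G.lamMat x)ᵀ v w = 0 ∨ ∃ e, (G.lamMat x)ᵀ v w = x e :=
    fun v w => h_lam w v
  have h_sum : ∑ k ∈ Finset.range (Fintype.card V + 2), G.lamMat x ^ k = 1 + G.lamMat x := by
    have h_sq : G.lamMat x ^ 2 = 0 := by rw [pow_two]; exact h_mul _ _ h_lam h_lam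
    rw [add_comm, Finset.sum_range_add, Finset.sum_range_succ, Finset.sum_range_one, pow_zero,
      pow_one, Finset.sum_eq_zero fun k _ => by rw [pow_add, h_sq, zero_mul], add_zero]
  rw [covMat, h_sum, hN, Matrix.transpose_add, Matrix.transpose_one]
  have h₁ := h_mul _ _ h_tr h_N
  have h₂ := h_mul _ _ h_tr h_lam
  have h₃ := h_mul _ _ h_N h_lam
  simp only [add_mul, mul_add, one_mul, mul_one, h₁, h₂, h₃, zero_mul]
  abel

/-- The edges of the skeleton of `G` together with the loops. -/
def edgeLoops (G : MixedGraph V) : Set (Sym2 V) :=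
  {e | ∀ v w, e = s(v, w) → v = w ∨ G.adj v w}

theorem adj.symm {G : MixedGraph V} {v w : V} (h : G.adj v w) : G.adj w v := by
  obtain ⟨h_ne, h | h | h⟩ := h
  · exact ⟨h_ne.symm, .inr (.inl h)⟩
  · exact ⟨h_ne.symm, .inl h⟩
  · exact ⟨h_ne.symm, .inr (.inr (G.symm _ _ h))⟩

theorem mk_mem_edgeLoops_iff {G : MixedGraph V} {v w : V} :
    s(v, w) ∈ G.edgeLoops ↔ v = w ∨ G.adj v w := by
  refine ⟨fun h => h v w rfl, fun h a b hab => ?_⟩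
  obtain ⟨rfl, rfl⟩ | ⟨rfl, rfl⟩ := Sym2.eq_iff.mp hab
  · exact h
  · exact h.imp Eq.symm adj.symm

theorem IsBAP.linear_part_apply {G : MixedGraph V} [DecidableEq V] (hG : G.IsBAP)
    (x : Sym2 V → R) {v w : V} (h : s(v, w) ∈ G.edgeLoops) :
    (G.omMat x + G.lamMat x + (G.lamMat x)ᵀ) v w = (1 : Matrix V V R) v w + x s(v, w) := by
  rw [mk_mem_edgeLoops_iff] at h
  simp only [Matrix.add_apply, Matrix.transpose_apply, omMat, lamMat, Matrix.one_apply]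
  rcases eq_or_ne v w with rfl | h_ne
  · simp [hG.1.not_D_self v]
  · have h_simple := hG.2 v w h_ne
    have h_swap : s(w, v) = s(v, w) := Sym2.eq_swap
    obtain h_eq | ⟨-, h | h | h⟩ := h
    · exact absurd h_eq h_ne
    · have h₁ : ¬ G.D w v := fun h' => h_simple.1 ⟨h, h'⟩
      have h₂ : ¬ G.B v w := fun h' => h_simple.2.1 ⟨h, h'⟩
      simp [h, h₁, h₂, h_ne]
    · have h₁ : ¬ G.D v w := fun h' => h_simple.1 ⟨h', h⟩
      have h₂ : ¬ G.B v w := fun h' => h_simple.2.2 ⟨h, h'⟩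
      simp [h, h₁, h₂, h_ne, h_swap]
    · have h₁ : ¬ G.D v w := fun h' => h_simple.2.1 ⟨h', h⟩
      have h₂ : ¬ G.D w v := fun h' => h_simple.2.2 ⟨h', h⟩
      simp [h, h₁, h₂, h_ne]

theorem IsBAP.covMat_sub_mem_sq [Fintype V] [DecidableEq V] {G : MixedGraph V} (hG : G.IsBAP)
    (I : Ideal R) (x : Sym2 V → R) (hx : ∀ e, x e ∈ I) {v w : V} (h : s(v, w) ∈ G.edgeLoops) :
    G.covMat x v w - (1 : Matrix V V R) v w - x s(v, w) ∈ I ^ 2 := by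
  rw [← Ideal.Quotient.eq_zero_iff_mem, map_sub, map_sub, map_covMat_apply,
    covMat_of_mul_eq_zero, hG.linear_part_apply _ h]
  · simp only [Matrix.one_apply, Function.comp_apply]
    split_ifs <;> simp
  · intro e e'
    rw [Function.comp_apply, Function.comp_apply, ← map_mul, Ideal.Quotient.eq_zero_iff_mem,
      pow_two]
    exact Ideal.mul_mem_mul (hx e) (hx e')

end Parametrization

section GenericPoint

variable {V R : Type*} [CommRing R]

open Classical in
/-- Extension by zero of a family indexed by a set of unordered pairs. -/
noncomputable def extendZero (E : Set (Sym2 V)) (y : E → R) (e : Sym2 V) : R :=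
  if h : e ∈ E then y ⟨e, h⟩ else 0

variable [Fintype V] [DecidableEq V]

/-- The homomorphism substituting the generic covariance matrix of `G`, with independent
parameters indexed by `E`, into a polynomial. -/
noncomputable def genericHom (G : MixedGraph V) (E : Set (Sym2 V)) :
    MvPolynomial (V × V) ℝ →ₐ[ℝ] MvPolynomial E ℝ :=
  MvPolynomial.aeval fun e => G.covMat (extendZero E MvPolynomial.X) e.1 e.2

theorem eval_genericHom (G : MixedGraph V) (E : Set (Sym2 V)) (y : E → ℝ)
    (p : MvPolynomial (V × V) ℝ) :
    MvPolynomial.eval y (G.genericHom E p) =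
      MvPolynomial.eval (fun e => G.covMat (extendZero E y) e.1 e.2) p := by
  have h_ext : MvPolynomial.eval y ∘ extendZero E MvPolynomial.X = extendZero E y := by
    ext e
    simp only [Function.comp_apply, extendZero]
    split_ifs <;> simp
  have h_hom : (MvPolynomial.eval y).comp (G.genericHom E : MvPolynomial (V × V) ℝ →+* _) =
      MvPolynomial.eval (fun e => G.covMat (extendZero E y) e.1 e.2) := by
    apply MvPolynomial.ringHom_ext
    · intro r; simp
    · intro e; simp [genericHom, map_covMat_apply, h_ext]
  exact congrArg (fun f => f p) h_hom

theorem posDef_omMat (G : MixedGraph V) (x : Sym2 V → ℝ)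
    (hx : ∀ e, x e ∈ Set.Icc (0 : ℝ) (1 / (Fintype.card V + 1))) : (G.omMat x).PosDef := by
  apply Matrix.IsHermitian.posDef_of_sum_row_lt_diag
  · ext v w
    have h_swap : s(w, v) = s(v, w) := Sym2.eq_swap
    have h_symm : G.B w v ↔ G.B v w := ⟨G.symm w v, G.symm v w⟩
    simp only [Matrix.conjTranspose_apply, star_trivial, omMat, h_swap, eq_comm (a := w)]
    by_cases h : G.B v w
    · simp only [h, h_symm.mpr h]
    · simp only [h, mt h_symm.mp h]
  · intro k
    have h_diag : 1 ≤ G.omMat x k k := by simpa [omMat] using (hx s(k, k)).1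
    refine lt_of_lt_of_le ?_ h_diag
    have h_pos : (0 : ℝ) < Fintype.card V + 1 := by positivity
    have h_le : ∀ j ∈ Finset.univ.erase k, ‖G.omMat x k j‖ ≤ 1 / (Fintype.card V + 1) := by
      intro j hj
      have h_ne : k ≠ j := (Finset.ne_of_mem_erase hj).symm
      rw [omMat, if_neg h_ne]
      split_ifs
      · rw [Real.norm_of_nonneg (hx _).1]
        exact (hx _).2
      · rw [norm_zero]; positivity
    refine (Finset.sum_le_card_nsmul _ _ _ h_le).trans_lt ?_
    have h_card : ((Finset.univ.erase k).card : ℝ) ≤ Fintype.card V := by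
      exact_mod_cast Finset.card_le_univ _
    rw [nsmul_eq_mul, mul_one_div, div_lt_one h_pos]
    linarith

theorem Acyclic.covMat_mem_model {G : MixedGraph V} (hG : G.Acyclic) (x : Sym2 V → ℝ)
    (hx : (G.omMat x).PosDef) : G.covMat x ∈ G.model := by
  refine ⟨G.lamMat x, G.omMat x, G.lamMat_eq_zero x, ⟨hx, fun v w h_ne h _ => ?_⟩,
    hG.covMat_eq x⟩
  simp [omMat, h_ne, h]

theorem IsBAP.exists_covMat_eq {G : MixedGraph V} (hG : G.IsBAP) {T : Matrix V V ℝ}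
    (hT : T ∈ G.model) : ∃ y : G.edgeLoops → ℝ, T = G.covMat (extendZero G.edgeLoops y) := by
  obtain ⟨L, W, hL, ⟨hW, hW_zero⟩, rfl⟩ := hT
  have hW_symm : ∀ v w, W v w = W w v := fun v w => by simpa using (hW.1.apply v w).symm
  let x : Sym2 V → ℝ := Sym2.lift ⟨fun v w => W v w - (1 : Matrix V V ℝ) v w + L v w + L w v, by
    intro v w
    have h_one : (1 : Matrix V V ℝ) v w = (1 : Matrix V V ℝ) w v := by
      simp only [Matrix.one_apply, eq_comm]
    linarith [hW_symm v w]⟩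
  have hx : ∀ v w, x s(v, w) = W v w - (1 : Matrix V V ℝ) v w + L v w + L w v := fun _ _ => rfl
  refine ⟨fun e => x e, ?_⟩
  have h_ext : ∀ v w, v = w ∨ G.adj v w →
      extendZero G.edgeLoops (fun e => x e) s(v, w) = x s(v, w) :=
    fun v w h => dif_pos (mk_mem_edgeLoops_iff.mpr h)
  have h_lam : G.lamMat (extendZero G.edgeLoops (fun e => x e)) = L := by
    ext v w
    rw [lamMat]
    split_ifs with h
    · have h_ne : v ≠ w := by rintro rfl; exact hG.1.not_D_self v h
      have h_simple := hG.2 v w h_ne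
      have h_B : ¬ G.B v w := fun h' => h_simple.2.1 ⟨h, h'⟩
      rw [h_ext v w (.inr ⟨h_ne, .inl h⟩), hx, Matrix.one_apply_ne h_ne,
        hL w v fun h' => h_simple.1 ⟨h, h'⟩,
        hW_zero v w h_ne h_B fun h' => h_B (G.symm _ _ h')]
      ring
    · exact (hL v w h).symm
  have h_om : G.omMat (extendZero G.edgeLoops (fun e => x e)) = W := by
    ext v w
    rw [omMat]
    split_ifs with h_eq h
    · subst h_eq
      rw [h_ext v v (.inl rfl), hx, Matrix.one_apply_eq, hL v v (hG.1.not_D_self v)]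
      ring
    · have h_simple := hG.2 v w h_eq
      rw [h_ext v w (.inr ⟨h_eq, .inr (.inr h)⟩), hx, Matrix.one_apply_ne h_eq,
        hL v w fun h' => h_simple.2.1 ⟨h', h⟩, hL w v fun h' => h_simple.2.2 ⟨h', h⟩]
      ring
    · exact (hW_zero v w h_eq h fun h' => h (G.symm _ _ h')).symm
  rw [hG.1.covMat_eq, h_lam, h_om]

/-- The vanishing ideal of the model is the kernel of the generic parametrization. -/
theorem IsBAP.genericHom_eq_zero_iff {G : MixedGraph V} (hG : G.IsBAP)
    (p : MvPolynomial (V × V) ℝ) :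
    G.genericHom G.edgeLoops p = 0 ↔
      ∀ T ∈ G.model, MvPolynomial.eval (fun e => T e.1 e.2) p = 0 := by
  constructor
  · intro hp T hT
    obtain ⟨y, rfl⟩ := hG.exists_covMat_eq hT
    rw [← eval_genericHom, hp, map_zero]
  · intro hp
    have h_pos : (0 : ℝ) < 1 / (Fintype.card V + 1) := by positivity
    refine MvPolynomial.funext_set (fun _ => Set.Icc (0 : ℝ) (1 / (Fintype.card V + 1)))
      (fun _ => Set.Icc_infinite h_pos) fun y hy => ?_
    rw [eval_genericHom, map_zero]
    refine hp _ (hG.1.covMat_mem_model _ (G.posDef_omMat _ fun e => ?_))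
    rw [extendZero]
    split_ifs
    · exact hy _ trivial
    · exact ⟨le_rfl, h_pos.le⟩

/-- The entries of the generic covariance matrix at the edges and loops of a bow-free acyclic
path diagram are algebraically independent. -/
theorem IsBAP.exists_injective_genericHom_comp {G : MixedGraph V} (hG : G.IsBAP) :
    ∃ s : MvPolynomial G.edgeLoops ℝ →ₐ[ℝ] MvPolynomial (V × V) ℝ,
      Function.Injective ((G.genericHom G.edgeLoops).comp s) := by
  have h_rep : ∀ e : G.edgeLoops, ∃ u : V × V, s(u.1, u.2) = e.1 := fun e => by
    obtain ⟨u, hu⟩ := Quot.exists_rep e.1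
    exact ⟨u, hu⟩
  choose u hu using h_rep
  refine ⟨MvPolynomial.aeval fun e =>
    MvPolynomial.X (u e) - MvPolynomial.C ((1 : Matrix V V ℝ) (u e).1 (u e).2), ?_⟩
  set f := (G.genericHom G.edgeLoops).comp (MvPolynomial.aeval fun e =>
    MvPolynomial.X (u e) - MvPolynomial.C ((1 : Matrix V V ℝ) (u e).1 (u e).2)) with hf
  set I : Ideal (MvPolynomial G.edgeLoops ℝ) := Ideal.span (Set.range MvPolynomial.X)
  have h_X : ∀ e, (MvPolynomial.X e : MvPolynomial G.edgeLoops ℝ) ∈ I :=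
    fun e => Ideal.subset_span ⟨e, rfl⟩
  have h_sq : ∀ e, f (MvPolynomial.X e) - MvPolynomial.X e ∈ I ^ 2 := by
    intro e
    have h_mem := hG.covMat_sub_mem_sq I (extendZero G.edgeLoops MvPolynomial.X)
      (fun e' => by
        rw [extendZero]
        split_ifs
        · exact h_X _
        · exact zero_mem _)
      (v := (u e).1) (w := (u e).2) (by rw [hu]; exact e.2)
    have h_ext : extendZero G.edgeLoops (MvPolynomial.X (R := ℝ)) s((u e).1, (u e).2) =
        MvPolynomial.X e := by
      rw [hu, extendZero, dif_pos e.2]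
    rw [h_ext] at h_mem
    convert h_mem using 2
    simp only [hf, genericHom, AlgHom.comp_apply, MvPolynomial.aeval_X, map_sub,
      MvPolynomial.algHom_C, Matrix.one_apply]
    split_ifs <;> simp
  exact MvPolynomial.injective_of_X_sub_mem_sq f h_sq

end GenericPoint

end MixedGraph

/-- For two BAPs with the same skeleton, inclusion of algebraic models
in one direction implies algebraic equivalence. -/
theorem algModel_eq_of_subset_of_skeleton_eq
    {V : Type*} [Fintype V] [DecidableEq V]
    (G G' : MixedGraph V) (hG : G.IsBAP) (hG' : G'.IsBAP)
    (hskel : ∀ v w, G.adj v w ↔ G'.adj v w)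
    (hsub : G.algModel ⊆ G'.algModel) :
    G.algModel = G'.algModel := by
  have h_vanish : ∀ p : MvPolynomial (V × V) ℝ,
      (∀ T ∈ G'.model, MvPolynomial.eval (fun e => T e.1 e.2) p = 0) →
        ∀ T ∈ G.model, MvPolynomial.eval (fun e => T e.1 e.2) p = 0 :=
    fun p hp T hT => hsub (fun _ hq => hq T hT) p hp
  have h_edges : G'.edgeLoops = G.edgeLoops := by
    ext e
    simp only [MixedGraph.edgeLoops, Set.mem_ofPred_eq, hskel]
  have h_iff := hG'.genericHom_eq_zero_iff
  rw [h_edges] at h_iff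
  obtain ⟨s, hs⟩ := hG.exists_injective_genericHom_comp
  have h_ker := AlgHom.ker_le_ker_of_injective_comp (G.genericHom G.edgeLoops)
    (G'.genericHom G.edgeLoops) s hs fun p hp =>
      (hG.genericHom_eq_zero_iff p).mpr (h_vanish p ((h_iff p).mp hp))
  refine hsub.antisymm fun S hS p hp => hS p ?_
  exact (h_iff p).mp (h_ker p ((hG.genericHom_eq_zero_iff p).mpr hp))
end
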